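/- arXiv:2004.14197 — 2 statements merged into one kernel-verified Lean document; each statement's English description precedes it below -/
import Mathlib

section
/- Let k be an integral domain in which 2 ≠ 0, and let σ be the k-algebra automorphism of k⟦x,y⟧ exchanging x and y. If u ∈ k⟦x,y⟧ is an invertible power series with constant term 1 such that σ(u) = u⁻¹, then u ≡ 1 mod (x−y), i.e., (x−y) divides u − 1 in k⟦x,y⟧. -/
/-!
Identifying `x` with `y` is a ring homomorphism `c` of `k⟦x,y⟧`, and `f - c f` is divisible by
`x - y` for every `f`, with the divided difference of `f` as quotient. Since `c` does not see the
exchange of `x` and `y`, applying it to `u * σ(u) = 1` gives `(c u)² = 1`, that is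
`(c u - 1) * (c u + 1) = 0`. The second factor has constant term `2`, so it is regular and
`c u = 1`; hence `x - y` divides `u - c u = u - 1`.
-/

noncomputable section
open MvPowerSeries

/-- The automorphism of `k⟦x,y⟧` exchanging the two variables. -/
def swapPS {k : Type*} [CommRing k] (f : MvPowerSeries (Fin 2) k) : MvPowerSeries (Fin 2) k :=
  fun d => MvPowerSeries.coeff (Finsupp.equivMapDomain (Equiv.swap 0 1) d) f

open Finsupp Filter
open scoped nonZeroDivisors

instance tendstoCofinite_update {α β : Type*} [DecidableEq α] (f : α → β) [TendstoCofinite f]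
    (a : α) (b : β) : TendstoCofinite (Function.update f a b) := by
  refine (tendstoCofinite_iff_finite_preimage_singleton _).mpr fun c ↦ ?_
  refine ((TendstoCofinite.finite_preimage_singleton f c).insert a).subset fun x hx ↦ ?_
  by_cases hxa : x = a
  · exact Or.inl hxa
  · exact Or.inr (by simpa [hxa] using hx)

theorem mapDomain_update_id {ι M : Type*} [DecidableEq ι] [AddCommMonoid M] (i j : ι)
    (d : ι →₀ M) :
    d.mapDomain (Function.update id i j) = d.erase i + single j (d i) := by
  have h_erase : (d.erase i).mapDomain (Function.update id i j) = d.erase i := by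
    refine (mapDomain_congr fun a ha ↦ ?_).trans mapDomain_id
    rw [support_erase] at ha
    exact Function.update_of_ne (Finset.ne_of_mem_erase ha) _ _
  conv_lhs => rw [← erase_add_single i d]
  rw [mapDomain_add, mapDomain_single, Function.update_self, h_erase]

theorem coeff_rename_equiv {ι κ R : Type*} [CommSemiring R] (e : ι ≃ κ) (f : MvPowerSeries ι R)
    (d : κ →₀ ℕ) : coeff d (rename e f) = coeff (equivMapDomain e.symm d) f := by
  have h_embDomain : embDomain e.toEmbedding (equivMapDomain e.symm d) = d := by
    rw [embDomain_eq_mapDomain, Equiv.coe_toEmbedding, ← equivMapDomain_eq_mapDomain,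
      ← equivMapDomain_trans, Equiv.symm_trans_self, equivMapDomain_refl]
  simpa only [h_embDomain, Equiv.coe_toEmbedding] using
    coeff_embDomain_rename e.toEmbedding f (equivMapDomain e.symm d)

theorem swapPS_eq_rename {k : Type*} [CommRing k] (f : MvPowerSeries (Fin 2) k) :
    swapPS f = rename (Equiv.swap 0 1) f := by
  ext d
  rw [coeff_rename_equiv, Equiv.symm_swap]
  rfl

section IdentifyVariables

variable {ι R : Type*} [DecidableEq ι] [CommSemiring R]

theorem rename_update_rename_swap (i j : ι) (f : MvPowerSeries ι R) :
    rename (Function.update id i j) (rename (Equiv.swap i j) f) =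
      rename (Function.update id i j) f := by
  have h_comp : Function.update id i j ∘ Equiv.swap i j = Function.update id i j := by
    funext a
    simp only [Function.comp_apply, Equiv.swap_apply_def, Function.update_apply, id]
    grind
  simp only [rename_rename, h_comp]

theorem mapDomain_update_id_eq_iff {i j : ι} (hij : i ≠ j) {d e : ι →₀ ℕ} (hd : d i = 0) :
    e.mapDomain (Function.update id i j) = d ↔
      ∃ q ≤ d j, d + single i q - single j q = e := by
  rw [mapDomain_update_id]
  constructor
  · rintro rfl
    refine ⟨e i, by simp, ?_⟩
    ext a
    simp only [tsub_apply, Finsupp.add_apply, single_apply, erase_apply]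
    grind
  · rintro ⟨q, hq, rfl⟩
    ext a
    simp only [tsub_apply, Finsupp.add_apply, single_apply, erase_apply]
    grind

theorem coeff_rename_update {i j : ι} (hij : i ≠ j) (f : MvPowerSeries ι R)
    {d : ι →₀ ℕ} (hd : d i = 0) :
    coeff d (rename (Function.update id i j) f) =
      ∑ q ∈ Finset.range (d j + 1), coeff (d + single i q - single j q) f := by
  classical
  have h_fibre : (TendstoCofinite.finite_preimage_singleton
      (mapDomain (Function.update id i j)) d).toFinset =
        (Finset.range (d j + 1)).image fun q ↦ d + single i q - single j q := by
    ext e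
    simp [mapDomain_update_id_eq_iff hij hd, Order.lt_add_one_iff]
  have h_inj : Function.Injective fun q : ℕ ↦ d + single i q - single j q := fun p q h ↦ by
    simpa [hij] using DFunLike.congr_fun h i
  rw [coeff_rename, h_fibre, Finset.sum_image h_inj.injOn]

theorem coeff_rename_update_of_ne_zero {i j : ι} (hij : i ≠ j) (f : MvPowerSeries ι R)
    {d : ι →₀ ℕ} (hd : d i ≠ 0) :
    coeff d (rename (Function.update id i j) f) = 0 := by
  refine coeff_rename_eq_zero _ _ ?_
  rintro ⟨e, rfl⟩
  simp [mapDomain_update_id, hij] at hd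

end IdentifyVariables

section DividedDifference

variable {ι R : Type*}

/-- The divided difference of a power series `f` in distinct variables `xᵢ` and `xⱼ`: the quotient
of `f - f(xⱼ, xⱼ)` by `xᵢ - xⱼ`, where `f(xⱼ, xⱼ)` is `f` with `xⱼ` substituted for `xᵢ`. The
coefficients come from `xᵢ ^ a - xⱼ ^ a = (xᵢ - xⱼ) * ∑ xᵢ ^ p * xⱼ ^ q`, the sum being over
`p + q + 1 = a`. As `q ≤ d j` throughout, the subtraction does not truncate. -/
def dividedDifference [Semiring R] (i j : ι) (f : MvPowerSeries ι R) : MvPowerSeries ι R :=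
  fun d ↦ ∑ q ∈ Finset.range (d j + 1), coeff (d + single i (q + 1) - single j q) f

theorem coeff_dividedDifference [Semiring R] (i j : ι) (f : MvPowerSeries ι R) (d : ι →₀ ℕ) :
    coeff d (dividedDifference i j f) =
      ∑ q ∈ Finset.range (d j + 1), coeff (d + single i (q + 1) - single j q) f :=
  rfl

theorem coeff_X_right_mul_dividedDifference [Semiring R] (i j : ι)
    (f : MvPowerSeries ι R) (d : ι →₀ ℕ) :
    coeff d (X j * dividedDifference i j f) =
      ∑ q ∈ Finset.range (d j), coeff (d + single i (q + 1) - single j (q + 1)) f := by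
  simp only [X, coeff_monomial_mul, one_mul, coeff_dividedDifference]
  split_ifs with hd
  · have h_card : (d - single j 1 : ι →₀ ℕ) j + 1 = d j := by
      simp [Nat.sub_add_cancel (single_le_iff.mp hd)]
    rw [h_card]
    refine Finset.sum_congr rfl fun q _ ↦ ?_
    rw [tsub_add_eq_add_tsub hd, tsub_tsub, ← single_add, add_comm 1 q]
  · have h_zero : d j = 0 := by simpa using hd
    simp [h_zero]

theorem coeff_X_left_mul_dividedDifference [Semiring R] {i j : ι} (hij : i ≠ j)
    (f : MvPowerSeries ι R) {d : ι →₀ ℕ} (hd : d i ≠ 0) :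
    coeff d (X i * dividedDifference i j f) =
      ∑ q ∈ Finset.range (d j + 1), coeff (d + single i q - single j q) f := by
  have h_le : single i 1 ≤ d := single_le_iff.mpr (Nat.one_le_iff_ne_zero.mpr hd)
  have h_apply : (d - single i 1 : ι →₀ ℕ) j = d j := by simp [hij]
  simp only [X, coeff_monomial_mul, if_pos h_le, one_mul, coeff_dividedDifference, h_apply]
  refine Finset.sum_congr rfl fun q _ ↦ ?_
  rw [add_comm q 1, single_add, ← add_assoc, tsub_add_cancel_of_le h_le]

theorem X_sub_X_mul_dividedDifference [DecidableEq ι] [CommRing R] {i j : ι} (hij : i ≠ j)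
    (f : MvPowerSeries ι R) :
    (X i - X j) * dividedDifference i j f = f - rename (Function.update id i j) f := by
  ext d
  have h_sum : ∑ q ∈ Finset.range (d j + 1), coeff (d + single i q - single j q) f =
      coeff d (X j * dividedDifference i j f) + coeff d f := by
    rw [coeff_X_right_mul_dividedDifference, Finset.sum_range_succ']
    simp
  rw [sub_mul, map_sub, map_sub]
  by_cases hd : d i = 0
  · have h_left : coeff d (X i * dividedDifference i j f) = 0 := by
      simp [X, coeff_monomial_mul, hd]
    rw [h_left, coeff_rename_update hij f hd, h_sum]
    ring
  · rw [coeff_X_left_mul_dividedDifference hij f hd, coeff_rename_update_of_ne_zero hij f hd, h_sum]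
    ring

theorem X_sub_X_dvd_sub_rename_update [DecidableEq ι] [CommRing R] (i j : ι)
    (f : MvPowerSeries ι R) :
    X i - X j ∣ f - rename (Function.update id i j) f := by
  obtain rfl | hij := eq_or_ne i j
  · have h_id : Function.update id i i = id := Function.update_eq_self i id
    simp only [h_id, rename_id_apply, sub_self, dvd_zero]
  · exact Dvd.intro _ (X_sub_X_mul_dividedDifference hij f)

end DividedDifference

theorem eq_one_of_mul_self_eq_one_of_constantCoeff {ι R : Type*} [CommRing R] (h2 : (2 : R) ∈ R⁰)
    {f : MvPowerSeries ι R} (hf : f * f = 1) (hconst : constantCoeff f = 1) : f = 1 := by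
  have h_regular : f + 1 ∈ (MvPowerSeries ι R)⁰ := by
    refine mem_nonZeroDivisors_of_constantCoeff ?_
    rwa [map_add, hconst, map_one, one_add_one_eq_two]
  have h_mul : (f - 1) * (f + 1) = 0 := by
    linear_combination hf
  exact sub_eq_zero.mp ((mul_right_mem_nonZeroDivisors_eq_zero_iff h_regular).mp h_mul)

theorem stmt9_general {ι k : Type*} [DecidableEq ι] [CommRing k] (h2 : (2 : k) ∈ k⁰) (i j : ι)
    (u v : MvPowerSeries ι k)
    (huv : u * v = 1)
    (hconst : constantCoeff u = 1)
    (hσ : rename (Equiv.swap i j) u = v) :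
    (X i - X j : MvPowerSeries ι k) ∣ u - 1 := by
  have h_sq : rename (Function.update id i j) u * rename (Function.update id i j) u = 1 := by
    have h := congrArg (rename (Function.update id i j)) huv
    rwa [map_mul, map_one, ← hσ, rename_update_rename_swap] at h
  have h_one : rename (Function.update id i j) u = 1 :=
    eq_one_of_mul_self_eq_one_of_constantCoeff h2 h_sq (by rw [constantCoeff_rename, hconst])
  simpa only [h_one] using X_sub_X_dvd_sub_rename_update i j u

theorem stmt9 {k : Type*} [CommRing k] [IsDomain k] (h2 : (2 : k) ≠ 0)
    (u v : MvPowerSeries (Fin 2) k)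
    (huv : u * v = 1)
    (hconst : MvPowerSeries.constantCoeff u = 1)
    (hσ : swapPS u = v) :
    ((X 0 : MvPowerSeries (Fin 2) k) - X 1) ∣ u - 1 :=
  stmt9_general (mem_nonZeroDivisors_of_ne_zero h2) 0 1 u v huv hconst
    ((swapPS_eq_rename u).symm.trans hσ)
end
end

section
/- Let k be a commutative ring and p(x,y) ∈ k⟦x,y⟧ any power series; write p₁₂ = p(x₁,x₂) and p₂₁ = p(x₂,x₁) in k⟦x₁,x₂⟧, and let E₁ = x₁ + x₂, E₂ = x₁x₂. For every integer n ≥ 0 there is a unique power series ρ_n ∈ k⟦x₁,x₂⟧ satisfying (x₁ − x₂)·ρ_n = x₁ⁿ·p₁₂ − x₂ⁿ·p₂₁; moreover each ρ_n is symmetric in x₁ and x₂, and the recursion ρ_{n+2} − E₁·ρ_{n+1} + E₂·ρ_n = 0 holds for all n ≥ 0. -/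
noncomputable section
open MvPowerSeries

/-!
Existence: `f - f(x₂, x₁)` vanishes on the diagonal `x₁ = x₂`, and the automorphism
`x₁ ↦ x₁ + x₂` turns the diagonal into `x₁ = 0`, where vanishing means divisibility by `x₁`.
The same automorphism sends `x₁ - x₂` to the non-zero-divisor `x₁`, so `x₁ - x₂` may be cancelled:
this gives uniqueness, and reduces symmetry and the recursion to identities between multiples
of `x₁ - x₂`.
-/

theorem recurrence_of_sub_mul_eq {R : Type*} [CommRing R] {a b : R}
    (hab : a - b ∈ nonZeroDivisors R) {u v r₀ r₁ r₂ : R} {n : ℕ}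
    (h₀ : (a - b) * r₀ = a ^ n * u - b ^ n * v)
    (h₁ : (a - b) * r₁ = a ^ (n + 1) * u - b ^ (n + 1) * v)
    (h₂ : (a - b) * r₂ = a ^ (n + 2) * u - b ^ (n + 2) * v) :
    r₂ - (a + b) * r₁ + a * b * r₀ = 0 := by
  rw [← mul_cancel_left_mem_nonZeroDivisors hab]
  linear_combination h₂ - (a + b) * h₁ + a * b * h₀

section Diagonal

variable {σ R : Type*} [DecidableEq σ]

theorem X_dvd_iff_rescale_update_eq_zero [CommSemiring R] {i : σ} {f : MvPowerSeries σ R} :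
    X i ∣ f ↔ rescale (Function.update (1 : σ → R) i 0) f = 0 := by
  constructor
  · rintro ⟨g, rfl⟩
    have hX : rescale (Function.update (1 : σ → R) i 0) (X i) = 0 := by
      ext d
      obtain rfl | hd := eq_or_ne d (Finsupp.single i 1) <;> simp [coeff_rescale, coeff_X, *]
    rw [map_mul, hX, zero_mul]
  · intro hf
    refine X_dvd_iff.2 fun d hd => ?_
    have hprod : (d.prod fun s m => Function.update (1 : σ → R) i 0 s ^ m) = 1 :=
      Finset.prod_eq_one fun s _ => by
        obtain rfl | hs := eq_or_ne s i <;> simp [*]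
    rw [← one_mul (coeff d f), ← hprod, ← coeff_rescale, hf, map_zero]

variable [CommRing R] {i j : σ}

theorem hasSubst_update {τ : Type*} {a : σ → MvPowerSeries τ R} (ha : HasSubst a) (i : σ)
    {b : MvPowerSeries τ R} (hb : IsNilpotent (constantCoeff b)) :
    HasSubst (Function.update a i b) where
  const_coeff s := by
    obtain rfl | hs := eq_or_ne s i
    · rwa [Function.update_self]
    · rw [Function.update_of_ne hs]
      exact ha.const_coeff s
  coeff_zero d := by
    refine ((ha.coeff_zero d).insert i).subset fun s hs => ?_
    obtain rfl | hsi := eq_or_ne s i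
    · exact Set.mem_insert s _
    · rw [Set.mem_ofPred_eq, Function.update_of_ne hsi] at hs
      exact Set.mem_insert_of_mem i hs

theorem hasSubst_update_X (i : σ) {b : MvPowerSeries σ R} (hb : constantCoeff b = 0) :
    HasSubst (Function.update X i b) :=
  hasSubst_update HasSubst.X i (hb ▸ IsNilpotent.zero)

theorem subst_update_X_subst_update_X {b c : MvPowerSeries σ R} (hb : constantCoeff b = 0)
    (hc : constantCoeff c = 0) (hbc : b.subst (Function.update X i c) = (X i : MvPowerSeries σ R))
    (f : MvPowerSeries σ R) :
    (f.subst (Function.update X i b)).subst (Function.update X i c) = f := by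
  have hc' := hasSubst_update_X i hc
  have hX : (fun s => (Function.update X i b s).subst (Function.update X i c)) =
      (X : σ → MvPowerSeries σ R) := by
    funext s
    obtain rfl | hs := eq_or_ne s i
    · rw [Function.update_self, hbc]
    · rw [Function.update_of_ne hs, subst_X hc', Function.update_of_ne hs]
  rw [subst_comp_subst_apply (hasSubst_update_X i hb) hc', hX, subst_self, id]

/-- The substitution `X i ↦ X i + X j`, as an automorphism with inverse `X i ↦ X i - X j`: the
linear change of variables that straightens the diagonal `X i = X j` to the hyperplane `X i = 0`. -/
def shear (hij : i ≠ j) : MvPowerSeries σ R ≃ₐ[R] MvPowerSeries σ R :=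
  have hadd : constantCoeff (X i + X j : MvPowerSeries σ R) = 0 := by simp
  have hsub : constantCoeff (X i - X j : MvPowerSeries σ R) = 0 := by simp
  AlgEquiv.ofAlgHom (substAlgHom (hasSubst_update_X i hadd))
    (substAlgHom (hasSubst_update_X i hsub))
    (AlgHom.ext fun f => by
      have h := hasSubst_update_X i hadd
      simpa only [AlgHom.comp_apply, substAlgHom_apply, AlgHom.id_apply] using
        subst_update_X_subst_update_X hsub hadd
          (by simp [subst_sub h, subst_X h, hij.symm]) f)
    (AlgHom.ext fun f => by
      have h := hasSubst_update_X i hsub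
      simpa only [AlgHom.comp_apply, substAlgHom_apply, AlgHom.id_apply] using
        subst_update_X_subst_update_X hadd hsub
          (by simp [subst_add h, subst_X h, hij.symm]) f)

theorem shear_apply (hij : i ≠ j) (f : MvPowerSeries σ R) :
    shear hij f = f.subst (Function.update X i (X i + X j)) :=
  substAlgHom_apply (hasSubst_update_X i (by simp)) f

theorem shear_X_sub_X (hij : i ≠ j) :
    shear hij (X i - X j : MvPowerSeries σ R) = X i := by
  have h : HasSubst (Function.update (X : σ → MvPowerSeries σ R) i (X i + X j)) :=
    hasSubst_update_X i (by simp)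
  rw [shear_apply, subst_sub h, subst_X h, subst_X h, Function.update_self,
    Function.update_of_ne hij.symm, add_sub_cancel_right]

theorem rescale_update_shear (hij : i ≠ j) (f : MvPowerSeries σ R) :
    rescale (Function.update (1 : σ → R) i 0) (shear hij f) =
      f.subst (Function.update (X : σ → MvPowerSeries σ R) i (X j)) := by
  have hkill := HasSubst.smul_X (Function.update (1 : σ → R) i 0)
  rw [shear_apply, rescale_eq_subst,
    subst_comp_subst_apply (hasSubst_update_X i (by simp)) hkill]
  congr 1
  funext s
  obtain rfl | hs := eq_or_ne s i
  · simp [subst_add hkill, subst_X hkill, hij.symm]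
  · simp [subst_X hkill, hs]

theorem X_sub_X_dvd_iff (hij : i ≠ j) {f : MvPowerSeries σ R} :
    X i - X j ∣ f ↔ f.subst (Function.update (X : σ → MvPowerSeries σ R) i (X j)) = 0 := by
  rw [← map_dvd_iff (shear hij), shear_X_sub_X, X_dvd_iff_rescale_update_eq_zero,
    rescale_update_shear]

end Diagonal

section Swap

variable {σ R : Type*} [CommRing R] {i j : σ}

variable (R) in
theorem X_sub_X_mem_nonZeroDivisors (hij : i ≠ j) :
    (X i - X j : MvPowerSeries σ R) ∈ nonZeroDivisors (MvPowerSeries σ R) := by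
  classical
  refine mem_nonZeroDivisors_of_injective (f := shear hij) (shear hij).injective ?_
  rw [shear_X_sub_X hij]
  exact X_mem_nonzeroDivisors

variable [DecidableEq σ]

theorem X_sub_X_dvd_sub_renameEquiv_swap (hij : i ≠ j) (f : MvPowerSeries σ R) :
    X i - X j ∣ f - renameEquiv R (Equiv.swap i j) f := by
  have h : HasSubst (Function.update (X : σ → MvPowerSeries σ R) i (X j)) :=
    hasSubst_update_X i (by simp)
  have hsubst : (renameEquiv R (Equiv.swap i j) f).subst (Function.update X i (X j)) =
      f.subst (Function.update (X : σ → MvPowerSeries σ R) i (X j)) := by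
    change (rename (Equiv.swap i j) f).subst (Function.update X i (X j)) = _
    rw [rename_eq_subst, subst_comp_subst_apply (HasSubst.X_comp _) h]
    congr 1
    funext s
    rw [Function.comp_apply, subst_X h]
    obtain rfl | hsi := eq_or_ne s i
    · simp [hij.symm]
    obtain rfl | hsj := eq_or_ne s j
    · simp [hsi]
    · rw [Equiv.swap_apply_of_ne_of_ne hsi hsj]
  rw [X_sub_X_dvd_iff hij, subst_sub h, hsubst, sub_self]

theorem existsUnique_X_sub_X_mul_eq (hij : i ≠ j) (f : MvPowerSeries σ R) :
    ∃! ρ : MvPowerSeries σ R, (X i - X j) * ρ = f - renameEquiv R (Equiv.swap i j) f := by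
  obtain ⟨ρ, hρ⟩ := X_sub_X_dvd_sub_renameEquiv_swap hij f
  exact ⟨ρ, hρ.symm, fun τ hτ =>
    (mul_cancel_left_mem_nonZeroDivisors (X_sub_X_mem_nonZeroDivisors R hij)).1 (hτ.trans hρ)⟩

theorem renameEquiv_swap_eq_self_of_X_sub_X_mul_eq (hij : i ≠ j) {f ρ : MvPowerSeries σ R}
    (hρ : (X i - X j) * ρ = f - renameEquiv R (Equiv.swap i j) f) :
    renameEquiv R (Equiv.swap i j) ρ = ρ := by
  have hinv : renameEquiv R (Equiv.swap i j) (renameEquiv R (Equiv.swap i j) f) = f :=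
    (renameEquiv R (Equiv.swap i j)).left_inv f
  have hi : renameEquiv R (Equiv.swap i j) (X i) = X j := by simp
  have hj : renameEquiv R (Equiv.swap i j) (X j) = X i := by simp
  have hswap := congrArg (renameEquiv R (Equiv.swap i j)) hρ
  rw [map_mul, map_sub, map_sub, hi, hj, hinv] at hswap
  rw [← mul_cancel_left_mem_nonZeroDivisors (X_sub_X_mem_nonZeroDivisors R hij)]
  linear_combination -hswap - hρ

end Swap

theorem coeff_renameEquiv {σ τ R : Type*} [CommSemiring R] (e : σ ≃ τ) (f : MvPowerSeries σ R)
    (d : τ →₀ ℕ) :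
    coeff d (renameEquiv R e f) = coeff (Finsupp.equivMapDomain e.symm d) f := by
  have hd : Finsupp.embDomain e.toEmbedding (Finsupp.equivMapDomain e.symm d) = d := by
    ext t
    rw [← e.apply_symm_apply t]
    exact (Finsupp.embDomain_apply_self _ _ _).trans (by simp)
  rw [← coeff_embDomain_rename e.toEmbedding, hd]
  rfl

theorem swapPS_eq_renameEquiv_swap {k : Type*} [CommRing k] (f : MvPowerSeries (Fin 2) k) :
    swapPS f = renameEquiv k (Equiv.swap 0 1) f :=
  MvPowerSeries.ext fun d => (coeff_renameEquiv (Equiv.swap 0 1) f d).symm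

theorem stmt11_general {σ k : Type*} [DecidableEq σ] [CommRing k] {i j : σ} (hij : i ≠ j)
    (p : MvPowerSeries σ k) :
    (∀ n : ℕ,
      (∃! ρ : MvPowerSeries σ k,
        (X i - X j) * ρ = X i ^ n * p - X j ^ n * renameEquiv k (Equiv.swap i j) p) ∧
      (∀ ρ : MvPowerSeries σ k,
        (X i - X j) * ρ = X i ^ n * p - X j ^ n * renameEquiv k (Equiv.swap i j) p →
        renameEquiv k (Equiv.swap i j) ρ = ρ)) ∧
    (∀ (n : ℕ) (ρn ρn1 ρn2 : MvPowerSeries σ k),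
      (X i - X j) * ρn = X i ^ n * p - X j ^ n * renameEquiv k (Equiv.swap i j) p →
      (X i - X j) * ρn1 = X i ^ (n + 1) * p - X j ^ (n + 1) * renameEquiv k (Equiv.swap i j) p →
      (X i - X j) * ρn2 = X i ^ (n + 2) * p - X j ^ (n + 2) * renameEquiv k (Equiv.swap i j) p →
      ρn2 - (X i + X j) * ρn1 + X i * X j * ρn = 0) := by
  have hswap (n : ℕ) : X j ^ n * renameEquiv k (Equiv.swap i j) p =
      renameEquiv k (Equiv.swap i j) (X i ^ n * p) := by simp
  refine ⟨fun n => ?_, fun n ρn ρn1 ρn2 =>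
    recurrence_of_sub_mul_eq (X_sub_X_mem_nonZeroDivisors k hij)⟩
  rw [hswap]
  exact ⟨existsUnique_X_sub_X_mul_eq hij _, fun ρ =>
    renameEquiv_swap_eq_self_of_X_sub_X_mul_eq hij⟩

theorem stmt11 {k : Type*} [CommRing k] (p : MvPowerSeries (Fin 2) k) :
    -- existence and uniqueness of `ρ_n`, and its symmetry
    (∀ n : ℕ,
      (∃! ρ : MvPowerSeries (Fin 2) k,
        ((X 0 : MvPowerSeries (Fin 2) k) - X 1) * ρ =
          (X 0 : MvPowerSeries (Fin 2) k) ^ n * p - (X 1 : MvPowerSeries (Fin 2) k) ^ n * swapPS p) ∧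
      (∀ ρ : MvPowerSeries (Fin 2) k,
        ((X 0 : MvPowerSeries (Fin 2) k) - X 1) * ρ =
          (X 0 : MvPowerSeries (Fin 2) k) ^ n * p - (X 1 : MvPowerSeries (Fin 2) k) ^ n * swapPS p →
        swapPS ρ = ρ)) ∧
    -- the recursion `ρ_{n+2} − E₁·ρ_{n+1} + E₂·ρ_n = 0`
    (∀ (n : ℕ) (ρn ρn1 ρn2 : MvPowerSeries (Fin 2) k),
      ((X 0 : MvPowerSeries (Fin 2) k) - X 1) * ρn =
        (X 0 : MvPowerSeries (Fin 2) k) ^ n * p - (X 1 : MvPowerSeries (Fin 2) k) ^ n * swapPS p →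
      ((X 0 : MvPowerSeries (Fin 2) k) - X 1) * ρn1 =
        (X 0 : MvPowerSeries (Fin 2) k) ^ (n + 1) * p -
          (X 1 : MvPowerSeries (Fin 2) k) ^ (n + 1) * swapPS p →
      ((X 0 : MvPowerSeries (Fin 2) k) - X 1) * ρn2 =
        (X 0 : MvPowerSeries (Fin 2) k) ^ (n + 2) * p -
          (X 1 : MvPowerSeries (Fin 2) k) ^ (n + 2) * swapPS p →
      ρn2 - ((X 0 : MvPowerSeries (Fin 2) k) + X 1) * ρn1 +
        ((X 0 : MvPowerSeries (Fin 2) k) * X 1) * ρn = 0) := by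
  simpa only [swapPS_eq_renameEquiv_swap] using stmt11_general Fin.zero_ne_one p
end
end
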